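/- There exists an absolute constant c > 0 such that the following holds. In the model Y = Xβ* + ξ where X is an n×p random matrix (p ≥ n) with i.i.d. N(0,Σ) rows, if k* ≤ c·n, then for η > 0 small enough there exist absolute constants c₁, c₂, c₃ > 0 such that with probability at least 1 − c₁e^{−c₂n}, the minimum ℓ2-norm interpolator β̂ satisfies both ‖β̂ − β*‖₂ ≤ ρ and ‖Σ^{1/2}(β̂ − β*)‖₂ ≤ max( ρ·r*(η), c₃‖ξ‖₂/√n ). -/

import Mathlib

open MeasureTheory ProbabilityTheory Matrix Finset
open scoped ENNReal Classical

noncomputable section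

/-- Euclidean (`ℓ2`) norm of a finite real vector. -/
def enorm2 {m : ℕ} (v : Fin m → ℝ) : ℝ := Real.sqrt (∑ i, v i ^ 2)

/-- The prediction (semi-)norm `‖Σ^{1/2} d‖₂ = √(dᵀ Σ d)`. -/
def predNorm {p : ℕ} (Sig : Matrix (Fin p) (Fin p) ℝ) (d : Fin p → ℝ) : ℝ :=
  Real.sqrt (d ⬝ᵥ Sig.mulVec d)

/-- The standard Gaussian measure `N(0, I_p)` on `ℝ^p`. -/
def stdGaussian (p : ℕ) : Measure (Fin p → ℝ) :=
  Measure.pi fun _ : Fin p => gaussianReal 0 1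

/-- `Σ^{1/2} = P Λ^{1/2} Pᵀ` built from the eigendecomposition data. -/
def covHalf (p : ℕ) (lam : ℕ → ℝ) (Porth : Matrix (Fin p) (Fin p) ℝ) :
    Matrix (Fin p) (Fin p) ℝ :=
  Porth * Matrix.diagonal (fun i : Fin p => Real.sqrt (lam ((i : ℕ) + 1))) * Porthᵀ

/-- The Gaussian law `N(0,Σ)` on `ℝ^p`, realized as the pushforward of `N(0,I_p)`
by `g ↦ Σ^{1/2} g`. -/
def mvGaussian (p : ℕ) (lam : ℕ → ℝ) (Porth : Matrix (Fin p) (Fin p) ℝ) :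
    Measure (Fin p → ℝ) :=
  Measure.map (fun g => (covHalf p lam Porth).mulVec g) (stdGaussian p)

/-- `r_k(Σ) = ∑_{i=k}^p λ_i(Σ)` (eigenvalues `1`-indexed). -/
def rsum (p : ℕ) (lam : ℕ → ℝ) (k : ℕ) : ℝ := ∑ i ∈ Finset.Icc k p, lam i

/-- The set `{k ∈ {1,…,p} : r_k(Σ)/λ_k(Σ) ≥ c₀ n}`. -/
def kstarSet (p : ℕ) (lam : ℕ → ℝ) (c0 : ℝ) (n : ℕ) : Set ℕ :=
  {k | 1 ≤ k ∧ k ≤ p ∧ c0 * n ≤ rsum p lam k / lam k}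

/-- `k* = inf { k ∈ {1,…,p} : r_k(Σ)/λ_k(Σ) ≥ c₀ n }`. -/
def kstar (p : ℕ) (lam : ℕ → ℝ) (c0 : ℝ) (n : ℕ) : ℕ := sInf (kstarSet p lam c0 n)

/-- `ρ = ‖β*‖₂ + 4‖ξ‖₂/√(r_{k*}(Σ))`. -/
def rho (p : ℕ) (lam : ℕ → ℝ) (c0 : ℝ) (n : ℕ) (βstar : Fin p → ℝ) (ξnorm : ℝ) : ℝ :=
  enorm2 βstar + 4 * ξnorm / Real.sqrt (rsum p lam (kstar p lam c0 n))

/-- `r*(η) = inf { r > 0 : ∑ᵢ min(λ_i(Σ), r²) ≤ η n r² }`. -/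
def rstar (p n : ℕ) (lam : ℕ → ℝ) (η : ℝ) : ℝ :=
  sInf {r : ℝ | 0 < r ∧ ∑ i : Fin p, min (lam ((i : ℕ) + 1)) (r ^ 2) ≤ η * n * r ^ 2}

/-- `r̄(γ) = sup { r > 0 : ∑ᵢ min(λ_i(Σ)ρ², r²) ≤ γ ‖ξ‖₂² }`. -/
def rbar (p : ℕ) (lam : ℕ → ℝ) (γ ρ ξnorm : ℝ) : ℝ :=
  sSup {r : ℝ | 0 < r ∧ ∑ i : Fin p, min (lam ((i : ℕ) + 1) * ρ ^ 2) (r ^ 2) ≤ γ * ξnorm ^ 2}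

/-- `k̄ = inf { k ≥ k* : r_k(Σ) ≤ (γ/2) r_{k*}(Σ) }`, with `k̄ = p+1` if the set is empty. -/
def kbar (p : ℕ) (lam : ℕ → ℝ) (c0 : ℝ) (n : ℕ) (γ : ℝ) : ℕ :=
  if _h : {k | kstar p lam c0 n ≤ k ∧
      rsum p lam k ≤ γ / 2 * rsum p lam (kstar p lam c0 n)}.Nonempty
  then sInf {k | kstar p lam c0 n ≤ k ∧
      rsum p lam k ≤ γ / 2 * rsum p lam (kstar p lam c0 n)}
  else p + 1

/-- `b` is a minimum `ℓ2`-norm interpolator for the design `M` and responses `Y`. -/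
def IsMinInterp {n p : ℕ} (M : Fin n → Fin p → ℝ) (Y : Fin n → ℝ) (b : Fin p → ℝ) : Prop :=
  (∀ i, ∑ j, M i j * b j = Y i) ∧
    ∀ b' : Fin p → ℝ, (∀ i, ∑ j, M i j * b' j = Y i) → enorm2 b ≤ enorm2 b'

lemma exp_neg_sub_sq_le_one_sub {x : ℝ} (hx : x ≤ 1 / 2) : Real.exp (-(x + x ^ 2)) ≤ 1 - x := by
  have key : 1 ≤ (1 - x) * Real.exp (x + x ^ 2) := by
    rcases le_total x 0 with h | h
    · have h1 := Real.add_one_le_exp (x + x ^ 2)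
      nlinarith [mul_le_mul_of_nonneg_left h1 (by linarith : 0 ≤ 1 - x),
        mul_nonneg (sq_nonneg x) (neg_nonneg.2 h)]
    · have h1 := Real.quadratic_le_exp_of_nonneg (by positivity : 0 ≤ x + x ^ 2)
      have h2 := mul_le_mul_of_nonneg_left h1 (by linarith : 0 ≤ 1 - x)
      have h3 : 2 * x ≤ (1 - x) * (1 + x) ^ 2 := by
        nlinarith [mul_nonneg h h, mul_nonneg (mul_nonneg h h) (by linarith : 0 ≤ 1 / 2 - x)]
      nlinarith [mul_le_mul_of_nonneg_left h3 (sq_nonneg x)]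
  rw [Real.exp_neg, inv_le_iff_one_le_mul₀ (Real.exp_pos _)]
  exact key

lemma gaussianPDFReal_mul_exp_sq (s x : ℝ) :
    gaussianPDFReal 0 1 x * Real.exp (s * x ^ 2) =
      (√(2 * Real.pi))⁻¹ * Real.exp (-(1 / 2 - s) * x ^ 2) := by
  rw [gaussianPDFReal_def]
  simp only [NNReal.coe_one, mul_one, sub_zero]
  rw [mul_assoc, ← Real.exp_add]
  congr 2
  ring

lemma integrable_exp_sq_gaussianReal {s : ℝ} (hs : s < 1 / 2) :
    Integrable (fun x => Real.exp (s * x ^ 2)) (gaussianReal 0 1) := by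
  rw [gaussianReal_of_var_ne_zero _ one_ne_zero,
    integrable_withDensity_iff (measurable_gaussianPDF 0 1)
      (Filter.Eventually.of_forall fun _ => gaussianPDF_lt_top)]
  simp_rw [toReal_gaussianPDF, mul_comm (Real.exp _), gaussianPDFReal_mul_exp_sq]
  exact (integrable_exp_neg_mul_sq (by linarith)).const_mul _

lemma integral_exp_sq_gaussianReal_le {s : ℝ} (hs : s ≤ 1 / 4) :
    ∫ x, Real.exp (s * x ^ 2) ∂(gaussianReal 0 1) ≤ Real.exp (s + 2 * s ^ 2) := by
  rw [integral_gaussianReal_eq_integral_smul one_ne_zero]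
  simp_rw [smul_eq_mul, gaussianPDFReal_mul_exp_sq]
  rw [integral_const_mul, integral_gaussian]
  have hpi := Real.pi_pos
  have h1 : (√(2 * Real.pi))⁻¹ * √(Real.pi / (1 / 2 - s)) = √((1 - 2 * s)⁻¹) := by
    rw [← Real.sqrt_inv, ← Real.sqrt_mul (by positivity)]
    congr 1
    have : (1 / 2 - s) ≠ 0 := by linarith
    have : (1 - 2 * s) ≠ 0 := by linarith
    field_simp
  rw [h1]
  apply Real.sqrt_le_iff.2 ⟨(Real.exp_pos _).le, ?_⟩
  have h2 := exp_neg_sub_sq_le_one_sub (x := 2 * s) (by linarith)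
  rw [← Real.exp_nat_mul]
  calc (1 - 2 * s)⁻¹ ≤ (Real.exp (-(2 * s + (2 * s) ^ 2)))⁻¹ := by
        gcongr
    _ = _ := by rw [← Real.exp_neg]; congr 1; push_cast; ring

section ChiSquare

variable {κ : Type*} [Fintype κ] {w : κ → ℝ} {L : ℝ}

lemma integrable_exp_weighted_sq {s : ℝ} (hs : ∀ j, s * w j ≤ 1 / 4) :
    Integrable (fun z : κ → ℝ => Real.exp (s * ∑ j, w j * z j ^ 2))
      (Measure.pi fun _ => gaussianReal 0 1) := by
  have h := Integrable.fintype_prod (μ := fun _ : κ => gaussianReal 0 1)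
    (f := fun (j : κ) (x : ℝ) => Real.exp (s * w j * x ^ 2))
    (fun j => integrable_exp_sq_gaussianReal (by linarith [hs j]))
  refine h.congr (Filter.Eventually.of_forall fun z => ?_)
  simp only [← Real.exp_sum, Finset.mul_sum, mul_assoc]

lemma mgf_weighted_sq_le {s : ℝ} (hw : ∀ j, 0 ≤ w j) (hL : ∀ j, w j ≤ L)
    (hs : ∀ j, s * w j ≤ 1 / 4) :
    mgf (fun z : κ → ℝ => ∑ j, w j * z j ^ 2) (Measure.pi fun _ => gaussianReal 0 1) s ≤
      Real.exp ((s + 2 * s ^ 2 * L) * ∑ j, w j) := by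
  have h := integral_fintype_prod_eq_prod (𝕜 := ℝ) (μ := fun _ : κ => gaussianReal 0 1)
    (fun (j : κ) (x : ℝ) => Real.exp (s * w j * x ^ 2))
  have h' : mgf (fun z : κ → ℝ => ∑ j, w j * z j ^ 2) (Measure.pi fun _ => gaussianReal 0 1) s =
      ∏ j, ∫ x, Real.exp (s * w j * x ^ 2) ∂(gaussianReal 0 1) := by
    rw [← h, mgf]
    simp only [← Real.exp_sum, Finset.mul_sum, mul_assoc]
  rw [h', Finset.mul_sum, Real.exp_sum]
  refine Finset.prod_le_prod (fun j _ => integral_nonneg fun _ => (Real.exp_pos _).le) fun j _ => ?_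
  refine (integral_exp_sq_gaussianReal_le (hs j)).trans (Real.exp_le_exp.2 ?_)
  nlinarith [mul_nonneg (sq_nonneg s) (mul_nonneg (hw j) (sub_nonneg.2 (hL j)))]

/-- Upper tail of a weighted chi-square variable. -/
lemma weighted_sq_upper_tail (hw : ∀ j, 0 ≤ w j) (hL : ∀ j, w j ≤ L) (hL0 : 0 < L) (t : ℝ) :
    (Measure.pi fun _ : κ => gaussianReal 0 1)
      {z | 2 * ∑ j, w j + 4 * L * t ≤ ∑ j, w j * z j ^ 2} ≤ ENNReal.ofReal (Real.exp (-t)) := by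
  have hR : 0 ≤ ∑ j, w j := Finset.sum_nonneg fun j _ => hw j
  have hs : ∀ j, 1 / (4 * L) * w j ≤ 1 / 4 := fun j => by
    rw [div_mul_eq_mul_div, div_le_div_iff₀ (by positivity) (by norm_num)]
    linarith [hL j]
  have h := measure_ge_le_exp_mul_mgf (2 * ∑ j, w j + 4 * L * t)
    (by positivity : 0 ≤ 1 / (4 * L)) (integrable_exp_weighted_sq hs)
  rw [← ENNReal.ofReal_toReal (measure_ne_top _ _)]
  refine ENNReal.ofReal_le_ofReal (h.trans ?_)
  refine (mul_le_mul_of_nonneg_left (mgf_weighted_sq_le hw hL hs) (Real.exp_pos _).le).trans ?_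
  rw [← Real.exp_add, Real.exp_le_exp]
  have h1 : -(1 / (4 * L)) * (2 * ∑ j, w j + 4 * L * t) +
      (1 / (4 * L) + 2 * (1 / (4 * L)) ^ 2 * L) * ∑ j, w j = -t - (∑ j, w j) / (8 * L) := by
    field_simp
    ring
  rw [h1]
  have : 0 ≤ (∑ j, w j) / (8 * L) := by positivity
  linarith

/-- Lower tail of a weighted chi-square variable. -/
lemma weighted_sq_lower_tail (hw : ∀ j, 0 ≤ w j) (hL : ∀ j, w j ≤ L) (hL0 : 0 < L) :
    (Measure.pi fun _ : κ => gaussianReal 0 1)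
      {z | ∑ j, w j * z j ^ 2 ≤ 9 / 16 * ∑ j, w j} ≤
        ENNReal.ofReal (Real.exp (-((∑ j, w j) / (64 * L)))) := by
  have hR : 0 ≤ ∑ j, w j := Finset.sum_nonneg fun j _ => hw j
  have h0 : -(1 / (8 * L)) ≤ 0 := by
    have : 0 < 1 / (8 * L) := by positivity
    linarith
  have hs : ∀ j, -(1 / (8 * L)) * w j ≤ 1 / 4 := fun j => by
    have := mul_nonneg (neg_nonneg.2 h0) (hw j)
    linarith
  have h := measure_le_le_exp_mul_mgf (9 / 16 * ∑ j, w j) h0 (integrable_exp_weighted_sq hs)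
  rw [← ENNReal.ofReal_toReal (measure_ne_top _ _)]
  refine ENNReal.ofReal_le_ofReal (h.trans ?_)
  refine (mul_le_mul_of_nonneg_left (mgf_weighted_sq_le hw hL hs) (Real.exp_pos _).le).trans ?_
  rw [← Real.exp_add, Real.exp_le_exp]
  have h1 : -(-(1 / (8 * L))) * (9 / 16 * ∑ j, w j) +
      (-(1 / (8 * L)) + 2 * (-(1 / (8 * L))) ^ 2 * L) * ∑ j, w j =
        -((∑ j, w j) / (64 * L)) - (∑ j, w j) / (128 * L) := by
    field_simp
    ring
  rw [h1]
  have : 0 ≤ (∑ j, w j) / (128 * L) := by positivity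
  linarith

end ChiSquare

section GaussianLaw

variable {ι κ τ : Type*} [Fintype ι] [Fintype κ] [Fintype τ]

lemma integral_exp_linear_gaussian_pi (a : κ → ℝ) :
    ∫ g : κ → ℝ, Complex.exp (((∑ l, a l * g l : ℝ) : ℂ) * Complex.I)
        ∂(Measure.pi fun _ => gaussianReal 0 1) =
      Complex.exp (-((∑ l, a l ^ 2 : ℝ) : ℂ) / 2) := by
  have h := integral_fintype_prod_eq_prod (𝕜 := ℂ) (μ := fun _ : κ => gaussianReal 0 1)
    (fun (l : κ) (x : ℝ) => Complex.exp ((a l * x : ℝ) * Complex.I))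
  have h2 : ∀ l, ∫ x, Complex.exp ((a l * x : ℝ) * Complex.I) ∂(gaussianReal 0 1) =
      Complex.exp (-((a l : ℂ) ^ 2) / 2) := fun l => by
    have := charFun_gaussianReal (μ := 0) (v := 1) (a l)
    rw [charFun_apply_real] at this
    push_cast
    rw [this]
    congr 1
    push_cast
    ring
  simp_rw [h2, ← Complex.exp_sum] at h
  push_cast
  simp_rw [Finset.sum_mul]
  push_cast at h
  rw [h]
  congr 1
  rw [← Finset.sum_div, Finset.sum_neg_distrib]

lemma integral_exp_linear_gaussian_matrix (A : ι → κ → ℝ) :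
    ∫ g : ι → κ → ℝ, Complex.exp (((∑ i, ∑ l, A i l * g i l : ℝ) : ℂ) * Complex.I)
        ∂(Measure.pi fun _ => Measure.pi fun _ => gaussianReal 0 1) =
      Complex.exp (-((∑ i, ∑ l, A i l ^ 2 : ℝ) : ℂ) / 2) := by
  have h := integral_fintype_prod_eq_prod (𝕜 := ℂ)
    (μ := fun _ : ι => Measure.pi fun _ : κ => gaussianReal 0 1)
    (fun (i : ι) (x : κ → ℝ) => Complex.exp ((∑ l, A i l * x l : ℝ) * Complex.I))
  simp_rw [integral_exp_linear_gaussian_pi, ← Complex.exp_sum, ← Finset.sum_div,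
    Finset.sum_neg_distrib, ← Finset.sum_mul, ← Complex.ofReal_sum] at h
  exact h

/-- The images of a standard Gaussian matrix under an orthonormal family of linear forms are
independent standard Gaussian variables. -/
lemma map_orthonormal_gaussian_matrix (B : τ → ι → κ → ℝ)
    (hB : ∀ t : τ → ℝ, ∑ i, ∑ l, (∑ j, t j * B j i l) ^ 2 = ∑ j, t j ^ 2) :
    (Measure.pi fun _ : ι => Measure.pi fun _ : κ => gaussianReal 0 1).map
        (fun (g : ι → κ → ℝ) j => ∑ i, ∑ l, B j i l * g i l) =
      Measure.pi fun _ : τ => gaussianReal 0 1 := by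
  have hm : Measurable (fun (g : ι → κ → ℝ) j => ∑ i, ∑ l, B j i l * g i l) := by fun_prop
  have : IsProbabilityMeasure
      ((Measure.pi fun _ : ι => Measure.pi fun _ : κ => gaussianReal 0 1).map
        (fun (g : ι → κ → ℝ) j => ∑ i, ∑ l, B j i l * g i l)) :=
    Measure.isProbabilityMeasure_map hm.aemeasurable
  refine charFun_eq_pi_iff.1 fun t => ?_
  have hlp : Measurable (WithLp.toLp 2 : (τ → ℝ) → _) := WithLp.measurable_toLp 2 (τ → ℝ)
  rw [Measure.map_map hlp hm, charFun_apply,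
    integral_map (hlp.comp hm).aemeasurable (by fun_prop)]
  have h := integral_exp_linear_gaussian_matrix (fun i l => ∑ j, t j * B j i l)
  rw [hB] at h
  simp_rw [charFun_gaussianReal, ← Complex.exp_sum]
  convert h using 1
  · congr 1
    ext g
    congr 3
    simp only [Function.comp, PiLp.inner_apply]
    simp only [Finset.sum_mul, RCLike.inner_apply, conj_trivial, Finset.mul_sum]
    rw [Finset.sum_comm]
    refine Finset.sum_congr rfl fun i _ => ?_
    rw [Finset.sum_comm]
    simp only [mul_assoc]
  · congr 1
    push_cast
    simp [Finset.sum_div, neg_div]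

end GaussianLaw

section Net

variable {E F : Type*} [NormedAddCommGroup E] [NormedSpace ℝ E] [NormedAddCommGroup F]
  [NormedSpace ℝ F]

open Metric Module in
lemma card_le_of_quarter_separated [FiniteDimensional ℝ E] (s : Finset E)
    (hs : ∀ c ∈ s, ‖c‖ ≤ 1) (h : ∀ c ∈ s, ∀ d ∈ s, c ≠ d → 1 / 4 ≤ ‖c - d‖) :
    s.card ≤ 9 ^ finrank ℝ E := by
  borelize E
  let μ : Measure E := Measure.addHaar
  have hdisj : (s : Set E).PairwiseDisjoint fun c => ball (c : E) (1 / 8) := by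
    rintro c hc d hd hcd
    apply ball_disjoint_ball
    rw [dist_eq_norm]
    linarith [h c hc d hd hcd]
  have hsub : (⋃ c ∈ s, ball (c : E) (1 / 8)) ⊆ ball (0 : E) (9 / 8) := by
    refine Set.iUnion₂_subset fun x hx => ball_subset_ball' ?_
    rw [dist_zero_right]
    linarith [hs x hx]
  have hvol : (s.card : ℝ≥0∞) * ENNReal.ofReal ((1 / 8) ^ finrank ℝ E) * μ (ball 0 1) ≤
      ENNReal.ofReal ((9 / 8) ^ finrank ℝ E) * μ (ball 0 1) :=
    calc
      (s.card : ℝ≥0∞) * ENNReal.ofReal ((1 / 8) ^ finrank ℝ E) * μ (ball 0 1) =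
          μ (⋃ c ∈ s, ball (c : E) (1 / 8)) := by
        rw [measure_biUnion_finset hdisj fun c _ => measurableSet_ball]
        simp only [μ.addHaar_ball_of_pos _ (by norm_num : (0 : ℝ) < 1 / 8)]
        simp only [Finset.sum_const, nsmul_eq_mul, mul_assoc]
      _ ≤ μ (ball (0 : E) (9 / 8)) := measure_mono hsub
      _ = _ := by simp only [μ.addHaar_ball_of_pos _ (by norm_num : (0 : ℝ) < 9 / 8)]
  have hvol' : (s.card : ℝ≥0∞) * ENNReal.ofReal ((1 / 8) ^ finrank ℝ E) ≤
      ENNReal.ofReal ((9 / 8) ^ finrank ℝ E) :=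
    (ENNReal.mul_le_mul_iff_left (measure_ball_pos _ _ zero_lt_one).ne' measure_ball_lt_top.ne).1
      hvol
  have hcard : (s.card : ℝ) ≤ (9 : ℝ) ^ finrank ℝ E := by
    have := ENNReal.toReal_le_of_le_ofReal (by positivity) hvol'
    simpa [div_eq_mul_inv, mul_pow] using this
  exact mod_cast hcard

/-- The unit sphere has a `1/4`-net of cardinality at most `9 ^ dim`. -/
lemma exists_quarter_net [FiniteDimensional ℝ E] :
    ∃ T : Finset E, T.card ≤ 9 ^ Module.finrank ℝ E ∧ (∀ t ∈ T, ‖t‖ = 1) ∧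
      ∀ v : E, ‖v‖ = 1 → ∃ t ∈ T, ‖v - t‖ ≤ 1 / 4 := by
  let S : Set ℕ := {N | ∃ s : Finset E, s.card = N ∧ (∀ c ∈ s, ‖c‖ = 1) ∧
    ∀ c ∈ s, ∀ d ∈ s, c ≠ d → 1 / 4 ≤ ‖c - d‖}
  have hbound : ∀ N ∈ S, N ≤ 9 ^ Module.finrank ℝ E := by
    rintro _ ⟨s, rfl, h1, h2⟩
    exact card_le_of_quarter_separated s (fun c hc => (h1 c hc).le) h2
  have hbdd : BddAbove S := ⟨_, hbound⟩
  have hmem : sSup S ∈ S := Nat.sSup_mem ⟨0, ∅, by simp⟩ hbdd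
  obtain ⟨T, hTcard, hT1, hT2⟩ := hmem
  refine ⟨T, card_le_of_quarter_separated T (fun c hc => (hT1 c hc).le) hT2, hT1, fun v hv => ?_⟩
  by_contra! hcon
  have hvT : v ∉ T := fun hvT => by
    have := hcon v hvT
    rw [sub_self, norm_zero] at this
    linarith
  have hins : (insert v T).card ∈ S := by
    refine ⟨insert v T, rfl, ?_, ?_⟩
    · intro c hc
      rcases Finset.mem_insert.1 hc with rfl | hc
      · exact hv
      · exact hT1 c hc
    · intro c hc d hd hcd
      rcases Finset.mem_insert.1 hc with rfl | hc' <;>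
        rcases Finset.mem_insert.1 hd with rfl | hd'
      · exact absurd rfl hcd
      · exact (hcon d hd').le
      · rw [norm_sub_rev]; exact (hcon c hc').le
      · exact hT2 c hc' d hd' hcd
  have := le_csSup hbdd hins
  rw [Finset.card_insert_of_notMem hvT] at this
  omega

lemma opNorm_le_of_quarter_net {T : Finset E}
    (hT : ∀ v : E, ‖v‖ = 1 → ∃ t ∈ T, ‖v - t‖ ≤ 1 / 4) (A : E →L[ℝ] F) {M : ℝ} (hM : 0 ≤ M)
    (h : ∀ t ∈ T, ‖A t‖ ≤ M) : ‖A‖ ≤ 4 / 3 * M := by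
  have h1 : ‖A‖ ≤ M + ‖A‖ * (1 / 4) := by
    refine A.opNorm_le_of_unit_norm (by positivity) fun v hv => ?_
    obtain ⟨t, ht, hvt⟩ := hT v hv
    calc ‖A v‖ = ‖A t + A (v - t)‖ := by rw [← map_add, add_sub_cancel]
      _ ≤ ‖A t‖ + ‖A (v - t)‖ := norm_add_le _ _
      _ ≤ M + ‖A‖ * (1 / 4) := add_le_add (h t ht) (A.le_opNorm_of_le hvt)
  linarith

lemma le_norm_of_quarter_net {T : Finset E}
    (hT : ∀ v : E, ‖v‖ = 1 → ∃ t ∈ T, ‖v - t‖ ≤ 1 / 4) (A : E →L[ℝ] F) {m : ℝ}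
    (h : ∀ t ∈ T, m ≤ ‖A t‖) (v : E) : (m - ‖A‖ / 4) * ‖v‖ ≤ ‖A v‖ := by
  rcases eq_or_ne v 0 with rfl | hv
  · simp
  have hv' : 0 < ‖v‖ := norm_pos_iff.2 hv
  have hunit : ‖(‖v‖⁻¹ • v)‖ = 1 := by
    rw [norm_smul, norm_inv, norm_norm, inv_mul_cancel₀ hv'.ne']
  obtain ⟨t, ht, hvt⟩ := hT _ hunit
  have h1 : ‖A t‖ ≤ ‖A (‖v‖⁻¹ • v)‖ + ‖A‖ * (1 / 4) := by
    calc ‖A t‖ = ‖A (‖v‖⁻¹ • v) - A (‖v‖⁻¹ • v - t)‖ := by rw [← map_sub, sub_sub_cancel]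
      _ ≤ _ := (norm_sub_le _ _).trans (add_le_add le_rfl (A.le_opNorm_of_le hvt))
  rw [map_smul, norm_smul, norm_inv, norm_norm] at h1
  have h2 : m - ‖A‖ / 4 ≤ ‖v‖⁻¹ * ‖A v‖ := by linarith [h t ht]
  calc (m - ‖A‖ / 4) * ‖v‖ ≤ ‖v‖⁻¹ * ‖A v‖ * ‖v‖ := by gcongr
    _ = ‖A v‖ := by field_simp

end Net

section RandomMatrix

variable {ι κ : Type*} [Fintype ι] [Fintype κ]

/-- The linear map with squared norm `∑ j, w j * (∑ i, v i * W i j) ^ 2`. -/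
def weightedCLM (w : κ → ℝ) (W : ι → κ → ℝ) : EuclideanSpace ℝ ι →L[ℝ] EuclideanSpace ℝ κ :=
  LinearMap.toContinuousLinearMap
    { toFun := fun v => WithLp.toLp 2 fun j => √(w j) * ∑ i, v i * W i j
      map_add' := fun u v => by
        ext j
        simp [add_mul, Finset.sum_add_distrib, mul_add]
      map_smul' := fun c v => by
        ext j
        simp only [PiLp.smul_apply, smul_eq_mul, RingHom.id_apply, mul_assoc, ← Finset.mul_sum]
        ring }

lemma norm_weightedCLM_sq {w : κ → ℝ} (hw : ∀ j, 0 ≤ w j) (W : ι → κ → ℝ)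
    (v : EuclideanSpace ℝ ι) :
    ‖weightedCLM w W v‖ ^ 2 = ∑ j, w j * (∑ i, v i * W i j) ^ 2 := by
  rw [EuclideanSpace.norm_sq_eq]
  refine Finset.sum_congr rfl fun j _ => ?_
  simp [weightedCLM, mul_pow, Real.sq_sqrt (hw j)]

variable {Ω : Type*} [MeasurableSpace Ω] {μ : Measure Ω} {W : Ω → ι → κ → ℝ} {w : κ → ℝ} {L N : ℝ}

/-- All unit combinations of the rows of `W` are standard Gaussian vectors. -/
def IsIsoGaussian (μ : Measure Ω) (W : Ω → ι → κ → ℝ) : Prop :=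
  ∀ v : ι → ℝ, ∑ i, v i ^ 2 = 1 →
    μ.map (fun ω j => ∑ i, v i * W ω i j) = Measure.pi fun _ => gaussianReal 0 1

lemma IsIsoGaussian.measure_exists_mem_le (hW : IsIsoGaussian μ W)
    {T : Finset (EuclideanSpace ℝ ι)} (hT1 : ∀ t ∈ T, ‖t‖ = 1)
    (hcard : T.card ≤ 9 ^ Fintype.card ι) (hN : (Fintype.card ι : ℝ) ≤ N)
    {S : Set (κ → ℝ)}
    (hS : (Measure.pi fun _ : κ => gaussianReal 0 1) S ≤ ENNReal.ofReal (Real.exp (-(4 * N)))) :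
    μ {ω | ∃ t ∈ T, (fun j => ∑ i, t i * W ω i j) ∈ S} ≤ ENNReal.ofReal (Real.exp (-N)) := by
  have hsub : {ω | ∃ t ∈ T, (fun j => ∑ i, t i * W ω i j) ∈ S} ⊆
      ⋃ t ∈ T, (fun ω j => ∑ i, t i * W ω i j) ⁻¹' S := by
    rintro ω ⟨t, ht, h⟩
    exact Set.mem_biUnion ht h
  have hone : ∀ t ∈ T, μ ((fun ω j => ∑ i, t i * W ω i j) ⁻¹' S) ≤
      ENNReal.ofReal (Real.exp (-(4 * N))) := fun t ht => by
    have hsum : ∑ i, t i ^ 2 = 1 := by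
      have := EuclideanSpace.norm_sq_eq t
      rw [hT1 t ht] at this
      simpa using this.symm
    have hlaw := hW t hsum
    have hae : AEMeasurable (fun ω j => ∑ i, t i * W ω i j) μ := by
      apply AEMeasurable.of_map_ne_zero
      rw [hlaw]
      exact NeZero.ne _
    refine (Measure.le_map_apply hae S).trans ?_
    rw [hlaw]
    exact hS
  have hpow : (T.card : ℝ) ≤ Real.exp (3 * N) := by
    have h9 : (9 : ℝ) ≤ Real.exp 3 := by
      have h1 := Real.exp_one_gt_d9
      have : Real.exp 3 = Real.exp 1 ^ 3 := by rw [← Real.exp_nat_mul]; norm_num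
      rw [this]
      calc (9 : ℝ) ≤ 2.7 ^ 3 := by norm_num
        _ ≤ _ := by gcongr; linarith
    calc (T.card : ℝ) ≤ 9 ^ Fintype.card ι := by exact_mod_cast hcard
      _ ≤ Real.exp 3 ^ Fintype.card ι := by gcongr
      _ = Real.exp (Fintype.card ι * 3) := by rw [Real.exp_nat_mul]
      _ ≤ _ := by rw [Real.exp_le_exp]; linarith
  calc μ _ ≤ ∑ t ∈ T, μ ((fun ω j => ∑ i, t i * W ω i j) ⁻¹' S) :=
        (measure_mono hsub).trans (measure_biUnion_finset_le _ _)
    _ ≤ ∑ _t ∈ T, ENNReal.ofReal (Real.exp (-(4 * N))) := Finset.sum_le_sum hone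
    _ = ENNReal.ofReal (T.card * Real.exp (-(4 * N))) := by
        rw [Finset.sum_const, nsmul_eq_mul, ENNReal.ofReal_mul (by positivity),
          ENNReal.ofReal_natCast]
    _ ≤ _ := by
        refine ENNReal.ofReal_le_ofReal ?_
        calc _ ≤ Real.exp (3 * N) * Real.exp (-(4 * N)) := by gcongr
          _ = _ := by rw [← Real.exp_add]; congr 1; ring

/-- Operator norm bound for a matrix with Gaussian rows of variances `w j`. -/
lemma IsIsoGaussian.measure_not_upper_le (hW : IsIsoGaussian μ W) (hw : ∀ j, 0 ≤ w j)
    (hL : ∀ j, w j ≤ L) (hL0 : 0 < L) (hN : (Fintype.card ι : ℝ) ≤ N) :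
    μ {ω | ¬ ∀ v : EuclideanSpace ℝ ι, ∑ j, w j * (∑ i, v i * W ω i j) ^ 2 ≤
      (4 * ∑ j, w j + 32 * L * N) * ‖v‖ ^ 2} ≤ ENNReal.ofReal (Real.exp (-N)) := by
  obtain ⟨T, hcard, hT1, hT⟩ := exists_quarter_net (E := EuclideanSpace ℝ ι)
  rw [finrank_euclideanSpace] at hcard
  have hN0 : 0 ≤ N := le_trans (by positivity) hN
  have hR : 0 ≤ ∑ j, w j := Finset.sum_nonneg fun j _ => hw j
  refine le_trans (measure_mono ?_) (hW.measure_exists_mem_le hT1 hcard hN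
    (weighted_sq_upper_tail hw hL hL0 (4 * N)))
  intro ω hω
  by_contra hcon
  refine hω fun v => ?_
  simp only [Set.mem_ofPred_eq, not_exists, not_and, not_le] at hcon
  have hM : ∀ t ∈ T, ‖weightedCLM w (W ω) t‖ ≤ √(2 * ∑ j, w j + 4 * L * (4 * N)) := fun t ht => by
    apply Real.le_sqrt_of_sq_le
    rw [norm_weightedCLM_sq hw]
    exact (hcon t ht).le
  have hop := opNorm_le_of_quarter_net hT _ (Real.sqrt_nonneg _) hM
  rw [← norm_weightedCLM_sq hw]
  have hle := (weightedCLM w (W ω)).le_of_opNorm_le hop v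
  have hsq : √(2 * ∑ j, w j + 4 * L * (4 * N)) ^ 2 = 2 * ∑ j, w j + 4 * L * (4 * N) :=
    Real.sq_sqrt (by positivity)
  calc ‖weightedCLM w (W ω) v‖ ^ 2 ≤ (4 / 3 * √(2 * ∑ j, w j + 4 * L * (4 * N)) * ‖v‖) ^ 2 := by
        gcongr
    _ = 16 / 9 * (2 * ∑ j, w j + 4 * L * (4 * N)) * ‖v‖ ^ 2 := by
        rw [mul_pow, mul_pow, hsq]; norm_num
    _ ≤ _ := by
        gcongr
        nlinarith [mul_nonneg hL0.le hN0]

/-- Smallest singular value bound for a matrix with Gaussian rows of variances `w j`. -/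
lemma IsIsoGaussian.measure_not_lower_le (hW : IsIsoGaussian μ W) (hw : ∀ j, 0 ≤ w j)
    (hL : ∀ j, w j ≤ L) (hL0 : 0 < L) (hN : (Fintype.card ι : ℝ) ≤ N)
    (hR : 1024 * N * L ≤ ∑ j, w j) :
    μ {ω | ¬ ∀ v : EuclideanSpace ℝ ι, (∑ j, w j) / 16 * ‖v‖ ^ 2 ≤
      ∑ j, w j * (∑ i, v i * W ω i j) ^ 2} ≤ ENNReal.ofReal (2 * Real.exp (-N)) := by
  obtain ⟨T, hcard, hT1, hT⟩ := exists_quarter_net (E := EuclideanSpace ℝ ι)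
  rw [finrank_euclideanSpace] at hcard
  have hN0 : 0 ≤ N := le_trans (by positivity) hN
  have hLN : 0 ≤ N * L := by positivity
  have hR0 : 0 ≤ ∑ j, w j := by linarith
  have hlow := hW.measure_exists_mem_le hT1 hcard hN ((weighted_sq_lower_tail hw hL hL0).trans
    (ENNReal.ofReal_le_ofReal (Real.exp_le_exp.2 (neg_le_neg (b := (∑ j, w j) / (64 * L)) (by
      rw [le_div_iff₀ (by positivity)]
      nlinarith)))))
  have hupp := hW.measure_exists_mem_le hT1 hcard hN (weighted_sq_upper_tail hw hL hL0 (4 * N))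
  rw [two_mul, ENNReal.ofReal_add (Real.exp_pos _).le (Real.exp_pos _).le]
  refine le_trans (measure_mono ?_) ((measure_union_le _ _).trans (add_le_add hlow hupp))
  intro ω hω
  by_contra hcon
  refine hω fun v => ?_
  simp only [Set.mem_union, Set.mem_ofPred_eq, not_or, not_exists, not_and, not_le] at hcon
  obtain ⟨hcl, hcu⟩ := hcon
  set R := ∑ j, w j with hRdef
  have hM : ∀ t ∈ T, ‖weightedCLM w (W ω) t‖ ≤ 145 / 100 * √R := fun t ht => by
    refine abs_le_of_sq_le_sq' ?_ (by positivity) |>.2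
    rw [norm_weightedCLM_sq hw, mul_pow, Real.sq_sqrt hR0]
    nlinarith [hcu t ht]
  have hm : ∀ t ∈ T, 3 / 4 * √R ≤ ‖weightedCLM w (W ω) t‖ := fun t ht => by
    refine abs_le_of_sq_le_sq' ?_ (by positivity) |>.2
    rw [norm_weightedCLM_sq hw, mul_pow, Real.sq_sqrt hR0]
    nlinarith [hcl t ht]
  have hop := opNorm_le_of_quarter_net hT _ (by positivity) hM
  have hv := le_norm_of_quarter_net hT _ hm v
  rw [← norm_weightedCLM_sq hw]
  have hs := Real.sqrt_nonneg R
  calc R / 16 * ‖v‖ ^ 2 = (1 / 4 * √R * ‖v‖) ^ 2 := by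
        rw [mul_pow, mul_pow, Real.sq_sqrt hR0]; ring
    _ ≤ ((3 / 4 * √R - ‖weightedCLM w (W ω)‖ / 4) * ‖v‖) ^ 2 := by
        gcongr
        linarith
    _ ≤ _ := by
        gcongr
        refine mul_nonneg ?_ (norm_nonneg _)
        linarith

end RandomMatrix

section MinNorm

variable {E F : Type*} [NormedAddCommGroup E] [InnerProductSpace ℝ E]
  [NormedAddCommGroup F] [InnerProductSpace ℝ F]

lemma inner_eq_zero_of_forall_norm_le {b k : E} (h : ∀ t : ℝ, ‖b‖ ≤ ‖b + t • k‖) :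
    inner ℝ b k = 0 := by
  have hquad : ∀ t : ℝ, 0 ≤ ‖k‖ ^ 2 * (t * t) + 2 * inner ℝ b k * t + 0 := fun t => by
    have h1 : ‖b‖ ^ 2 ≤ ‖b + t • k‖ ^ 2 := by
      have := h t
      gcongr
    rw [norm_add_sq_real, inner_smul_right, norm_smul, mul_pow, Real.norm_eq_abs, sq_abs] at h1
    nlinarith
  have := discrim_le_zero hquad
  rw [discrim] at this
  nlinarith [sq_nonneg (inner ℝ b k)]

/-- Error bound for a minimum norm solution of a linear system, in terms of a lower bound on the
smallest singular value. -/
lemma norm_sub_le_of_min_norm [CompleteSpace E] [CompleteSpace F] [FiniteDimensional ℝ F]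
    (A : E →L[ℝ] F) {s : ℝ} (hs : 0 < s)
    (hA : ∀ v, s * ‖v‖ ≤ ‖ContinuousLinearMap.adjoint A v‖) {b β : E}
    (hb : ∀ b', A b' = A b → ‖b‖ ≤ ‖b'‖) :
    ‖b - β‖ ≤ ‖β‖ + ‖A (b - β)‖ / s := by
  have hinj : Function.Injective (A ∘L ContinuousLinearMap.adjoint A : F →ₗ[ℝ] F) := by
    rw [← LinearMap.ker_eq_bot, LinearMap.ker_eq_bot']
    intro v hv
    have h1 : inner ℝ (ContinuousLinearMap.adjoint A v) (ContinuousLinearMap.adjoint A v) =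
        (0 : ℝ) := by
      rw [ContinuousLinearMap.adjoint_inner_left]
      have : A (ContinuousLinearMap.adjoint A v) = 0 := hv
      rw [this, inner_zero_right]
    have h2 := hA v
    rw [inner_self_eq_zero.1 h1, norm_zero] at h2
    have : ‖v‖ ≤ 0 := by
      by_contra! h
      exact absurd h2 (not_le.2 (mul_pos hs h))
    exact norm_le_zero_iff.1 this
  obtain ⟨a, ha⟩ := LinearMap.surjective_of_injective hinj (A (b - β))
  set w := ContinuousLinearMap.adjoint A a with hw
  have ha' : A w = A (b - β) := ha
  have hAk : A (b - β - w) = 0 := by rw [map_sub, ha', sub_self]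
  have hbk : inner ℝ b (b - β - w) = 0 := by
    refine inner_eq_zero_of_forall_norm_le fun t => hb _ ?_
    rw [map_add, map_smul, hAk, smul_zero, add_zero]
  have hwk : inner ℝ w (b - β - w) = 0 := by
    rw [hw, ContinuousLinearMap.adjoint_inner_left, ← hw, hAk, inner_zero_right]
  have hk : ‖b - β - w‖ ≤ ‖β‖ := by
    have h1 : ‖b - β - w‖ ^ 2 = -inner ℝ β (b - β - w) := by
      rw [← real_inner_self_eq_norm_sq]
      nth_rw 1 [inner_sub_left, inner_sub_left]
      rw [hbk, hwk]
      ring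
    have h2 := neg_le_of_abs_le (abs_real_inner_le_norm β (b - β - w))
    by_contra! h
    nlinarith [norm_nonneg β]
  have hwn : ‖w‖ ≤ ‖A (b - β)‖ / s := by
    have h1 : ‖w‖ ^ 2 = inner ℝ a (A (b - β)) := by
      rw [← real_inner_self_eq_norm_sq]
      nth_rw 1 [hw]
      rw [ContinuousLinearMap.adjoint_inner_left, ha']
    have h2 := real_inner_le_norm a (A (b - β))
    have h3 := hA a
    rw [← hw] at h3
    rw [le_div_iff₀ hs]
    by_contra! h
    have hwpos : 0 < ‖w‖ := pos_of_mul_pos_left ((norm_nonneg _).trans_lt h) hs.le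
    nlinarith [mul_lt_mul_of_pos_left h hwpos, mul_le_mul_of_nonneg_left h2 hs.le,
      mul_le_mul_of_nonneg_right h3 (norm_nonneg (A (b - β)))]
  calc ‖b - β‖ = ‖(b - β - w) + w‖ := by rw [sub_add_cancel]
    _ ≤ _ := (norm_add_le _ _).trans (add_le_add hk hwn)

end MinNorm

lemma enorm2_eq_norm {m : ℕ} (v : Fin m → ℝ) : enorm2 v = ‖WithLp.toLp 2 v‖ := by
  rw [enorm2, EuclideanSpace.norm_eq]
  simp

lemma enorm2_nonneg {m : ℕ} (v : Fin m → ℝ) : 0 ≤ enorm2 v := Real.sqrt_nonneg _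

lemma enorm2_sq {m : ℕ} (v : Fin m → ℝ) : enorm2 v ^ 2 = ∑ i, v i ^ 2 :=
  Real.sq_sqrt (Finset.sum_nonneg fun _ _ => sq_nonneg _)

/-- Estimation error of the minimum norm interpolator under a lower bound on the smallest singular
value of the design. -/
lemma IsMinInterp.enorm2_sub_le {n p : ℕ} {M : Fin n → Fin p → ℝ} {β b : Fin p → ℝ}
    {ξ : Fin n → ℝ} {R : ℝ} (hR : 0 < R)
    (hM : ∀ v : Fin n → ℝ, R / 16 * ∑ i, v i ^ 2 ≤ ∑ l, (∑ i, v i * M i l) ^ 2)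
    (h : IsMinInterp M (fun i => (∑ j, M i j * β j) + ξ i) b) :
    enorm2 (fun j => b j - β j) ≤ enorm2 β + 4 * enorm2 ξ / √R := by
  let A : EuclideanSpace ℝ (Fin p) →L[ℝ] EuclideanSpace ℝ (Fin n) :=
    LinearMap.toContinuousLinearMap (Matrix.toEuclideanLin (Matrix.of M))
  have hAapp : ∀ x : EuclideanSpace ℝ (Fin p), ∀ i, A x i = ∑ j, M i j * x j := fun x i => rfl
  have hadj : ∀ (v : EuclideanSpace ℝ (Fin n)) l,
      ContinuousLinearMap.adjoint A v l = ∑ i, v i * M i l := fun v l => by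
    have h1 := ContinuousLinearMap.adjoint_inner_right A (EuclideanSpace.single l 1) v
    rw [EuclideanSpace.inner_single_left, map_one, one_mul] at h1
    rw [h1, PiLp.inner_apply]
    refine Finset.sum_congr rfl fun i _ => ?_
    simp [hAapp]
  have hs : ∀ v, √R / 4 * ‖v‖ ≤ ‖ContinuousLinearMap.adjoint A v‖ := fun v => by
    refine abs_le_of_sq_le_sq' ?_ (norm_nonneg _) |>.2
    rw [mul_pow, div_pow, Real.sq_sqrt hR.le, EuclideanSpace.norm_sq_eq, EuclideanSpace.norm_sq_eq]
    simp only [Real.norm_eq_abs, sq_abs, hadj]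
    have := hM v
    norm_num at this ⊢
    exact this
  have hmin : ∀ b' : EuclideanSpace ℝ (Fin p), A b' = A (WithLp.toLp 2 b) →
      ‖WithLp.toLp 2 b‖ ≤ ‖b'‖ := fun b' hb' => by
    have h1 := h.2 b' fun i => by
      rw [← h.1 i, ← hAapp b' i, hb', hAapp]
    rw [enorm2_eq_norm, enorm2_eq_norm] at h1
    exact h1
  have hmain := norm_sub_le_of_min_norm A (by positivity) hs (β := WithLp.toLp 2 β) hmin
  have hξ : A (WithLp.toLp 2 b - WithLp.toLp 2 β) = WithLp.toLp 2 ξ := by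
    ext i
    have := h.1 i
    simp only [hAapp, PiLp.sub_apply, mul_sub, Finset.sum_sub_distrib]
    linarith
  rw [hξ, ← enorm2_eq_norm, ← enorm2_eq_norm, ← WithLp.toLp_sub, ← enorm2_eq_norm] at hmain
  have h4 : enorm2 ξ / (√R / 4) = 4 * enorm2 ξ / √R := by
    field_simp
  rw [h4] at hmain
  exact hmain

section Restricted

variable {ι κ : Type*} [Fintype ι] [Fintype κ]

/-- Bound on a matrix-vector product from a bound on the transposed matrix. -/
lemma sum_sq_le_of_transpose_bound {G : ι → κ → ℝ} {w : κ → ℝ} (hw : ∀ j, 0 ≤ w j) {K : ℝ}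
    (hK0 : 0 ≤ K)
    (hK : ∀ v : ι → ℝ, ∑ j, w j * (∑ i, v i * G i j) ^ 2 ≤ K * ∑ i, v i ^ 2) (u : κ → ℝ) :
    ∑ i, (∑ j, √(w j) * G i j * u j) ^ 2 ≤ K * ∑ j, u j ^ 2 := by
  set y : ι → ℝ := fun i => ∑ j, √(w j) * G i j * u j with hy
  have hdual : ∑ i, y i ^ 2 = ∑ j, u j * (√(w j) * ∑ i, y i * G i j) := by
    calc ∑ i, y i ^ 2 = ∑ i, y i * ∑ j, √(w j) * G i j * u j :=
          Finset.sum_congr rfl fun i _ => sq (y i)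
      _ = ∑ j, ∑ i, y i * (√(w j) * G i j * u j) := by
          simp_rw [Finset.mul_sum]
          rw [Finset.sum_comm]
      _ = _ := by
          refine Finset.sum_congr rfl fun j _ => ?_
          rw [Finset.mul_sum, Finset.mul_sum]
          exact Finset.sum_congr rfl fun i _ => by ring
  have hcs := Finset.sum_mul_sq_le_sq_mul_sq Finset.univ u fun j => √(w j) * ∑ i, y i * G i j
  rw [← hdual] at hcs
  simp_rw [mul_pow, Real.sq_sqrt (hw _)] at hcs
  have hy0 : 0 ≤ ∑ i, y i ^ 2 := Finset.sum_nonneg fun _ _ => sq_nonneg _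
  have hu0 : 0 ≤ ∑ j, u j ^ 2 := Finset.sum_nonneg fun _ _ => sq_nonneg _
  have h1 := hcs.trans (mul_le_mul_of_nonneg_left (hK y) hu0)
  rcases hy0.eq_or_lt with h0 | h0
  · rw [← h0]
    positivity
  · nlinarith

/-- Lower bound on the design in directions of large prediction norm, obtained by splitting the
spectrum at level `r² / 2 ^ 14`. -/
lemma restricted_lower_bound {G : ι → κ → ℝ} {lam : κ → ℝ} (hlam : ∀ j, 0 ≤ lam j) {r m : ℝ}
    (hm : 0 ≤ m)
    (hhead : ∀ x : {j // r ^ 2 / 2 ^ 14 ≤ lam j} → ℝ,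
      m / 16 * ∑ j, x j ^ 2 ≤ ∑ i, (∑ j, x j * G i j) ^ 2)
    (htail : ∀ v : ι → ℝ,
      ∑ j, (if r ^ 2 / 2 ^ 14 ≤ lam j then 0 else lam j) * (∑ i, v i * G i j) ^ 2 ≤
        36 * (m * r ^ 2 / 2 ^ 14) * ∑ i, v i ^ 2)
    {u : κ → ℝ} (hu : r ^ 2 * ∑ j, u j ^ 2 ≤ ∑ j, lam j * u j ^ 2) :
    m / 64 * ∑ j, lam j * u j ^ 2 ≤ ∑ i, (∑ j, √(lam j) * G i j * u j) ^ 2 := by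
  set w : κ → ℝ := fun j => if r ^ 2 / 2 ^ 14 ≤ lam j then 0 else lam j with hw
  set w' : κ → ℝ := fun j => if r ^ 2 / 2 ^ 14 ≤ lam j then lam j else 0 with hw'
  have hw0 : ∀ j, 0 ≤ w j := fun j => by
    simp only [hw]
    split_ifs <;> simp [hlam j]
  have hwr : ∀ j, w j ≤ r ^ 2 / 2 ^ 14 := fun j => by
    simp only [hw]
    split_ifs with h
    · positivity
    · exact (not_le.1 h).le
  have hsum : ∀ j, w j + w' j = lam j := fun j => by
    simp only [hw, hw']
    split_ifs <;> simp
  have hsqrt : ∀ j, √(lam j) = √(w' j) + √(w j) := fun j => by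
    simp only [hw, hw']
    split_ifs <;> simp
  have hsub : ∀ f : κ → ℝ, ∑ j : {j // r ^ 2 / 2 ^ 14 ≤ lam j}, f j =
      ∑ j, if r ^ 2 / 2 ^ 14 ≤ lam j then f j else 0 := fun f => by
    rw [← Finset.sum_filter, ← Finset.sum_subtype_eq_sum_filter]
    simp
  have hK : 0 ≤ 36 * (m * r ^ 2 / 2 ^ 14) := by positivity
  have h2 := sum_sq_le_of_transpose_bound hw0 hK htail u
  have h1 := hhead fun j => √(lam j) * u j
  rw [hsub fun j => (√(lam j) * u j) ^ 2] at h1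
  have e1 : ∑ j, (if r ^ 2 / 2 ^ 14 ≤ lam j then (√(lam j) * u j) ^ 2 else 0) =
      ∑ j, w' j * u j ^ 2 := by
    refine Finset.sum_congr rfl fun j _ => ?_
    simp only [hw']
    split_ifs
    · rw [mul_pow, Real.sq_sqrt (hlam j)]
    · simp
  have e2 : ∀ i, ∑ j : {j // r ^ 2 / 2 ^ 14 ≤ lam j}, √(lam j) * u j * G i j =
      ∑ j, √(w' j) * G i j * u j := fun i => by
    rw [hsub fun j => √(lam j) * u j * G i j]
    refine Finset.sum_congr rfl fun j _ => ?_
    simp only [hw']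
    split_ifs
    · ring
    · simp
  rw [e1] at h1
  simp_rw [e2] at h1
  have htot : ∑ j, lam j * u j ^ 2 = ∑ j, w j * u j ^ 2 + ∑ j, w' j * u j ^ 2 := by
    rw [← Finset.sum_add_distrib]
    exact Finset.sum_congr rfl fun j _ => by rw [← hsum j]; ring
  have htl : ∑ j, w j * u j ^ 2 ≤ r ^ 2 / 2 ^ 14 * ∑ j, u j ^ 2 := by
    rw [Finset.mul_sum]
    exact Finset.sum_le_sum fun j _ => mul_le_mul_of_nonneg_right (hwr j) (sq_nonneg _)
  have hsplit : ∑ i, (∑ j, √(w' j) * G i j * u j) ^ 2 ≤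
      2 * ∑ i, (∑ j, √(lam j) * G i j * u j) ^ 2 + 2 * ∑ i, (∑ j, √(w j) * G i j * u j) ^ 2 := by
    rw [Finset.mul_sum, Finset.mul_sum, ← Finset.sum_add_distrib]
    refine Finset.sum_le_sum fun i _ => ?_
    have : ∑ j, √(lam j) * G i j * u j =
        ∑ j, √(w' j) * G i j * u j + ∑ j, √(w j) * G i j * u j := by
      rw [← Finset.sum_add_distrib]
      exact Finset.sum_congr rfl fun j _ => by rw [hsqrt j]; ring
    rw [this]
    nlinarith [sq_nonneg (∑ j, √(w' j) * G i j * u j + 2 * ∑ j, √(w j) * G i j * u j)]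
  set S := ∑ j, lam j * u j ^ 2
  set U := ∑ j, u j ^ 2
  have hS0 : 0 ≤ S := Finset.sum_nonneg fun j _ => mul_nonneg (hlam j) (sq_nonneg _)
  have h3 : m * (r ^ 2 * U) ≤ m * S := mul_le_mul_of_nonneg_left hu hm
  have h4 : m * ∑ j, w j * u j ^ 2 ≤ m * (r ^ 2 / 2 ^ 14 * U) := mul_le_mul_of_nonneg_left htl hm
  have h5 : m * S = m * ∑ j, w j * u j ^ 2 + m * ∑ j, w' j * u j ^ 2 := by rw [htot]; ring
  have h6 : 0 ≤ m * S := mul_nonneg hm hS0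
  have h7 : 36 * (m * r ^ 2 / 2 ^ 14) * U = 36 / 2 ^ 14 * (m * (r ^ 2 * U)) := by ring
  have h8 : m * (r ^ 2 / 2 ^ 14 * U) = 1 / 2 ^ 14 * (m * (r ^ 2 * U)) := by ring
  rw [h7] at h2
  rw [h8] at h4
  norm_num at h2 h4
  linarith

end Restricted

section Rotation

variable {p n : ℕ} {P : Matrix (Fin p) (Fin p) ℝ}

lemma sum_sq_orthonormal_columns (hP : Pᵀ * P = 1) {σ : Type*} [Fintype σ] {c : σ → Fin p}
    (hc : Function.Injective c) (x : σ → ℝ) :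
    ∑ l, (∑ j, x j * P l (c j)) ^ 2 = ∑ j, x j ^ 2 := by
  have horth : ∀ a b, ∑ l, P l a * P l b = if a = b then 1 else 0 := fun a b => by
    have := congrFun₂ hP a b
    rwa [Matrix.mul_apply, Matrix.one_apply] at this
  calc ∑ l, (∑ j, x j * P l (c j)) ^ 2 =
        ∑ l, ∑ j, ∑ k, x j * P l (c j) * (x k * P l (c k)) :=
        Finset.sum_congr rfl fun l _ => by rw [sq, Finset.sum_mul_sum]
    _ = ∑ j, ∑ k, x j * x k * ∑ l, P l (c j) * P l (c k) := by
        rw [Finset.sum_comm]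
        refine Finset.sum_congr rfl fun j _ => ?_
        rw [Finset.sum_comm]
        refine Finset.sum_congr rfl fun k _ => ?_
        rw [Finset.mul_sum]
        exact Finset.sum_congr rfl fun l _ => by ring
    _ = ∑ j, x j ^ 2 := by
        refine Finset.sum_congr rfl fun j _ => ?_
        simp [horth, hc.eq_iff, sq]

/-- The rows of `g` expressed in the orthonormal basis of columns of `P`. -/
def rotatedRows (P : Matrix (Fin p) (Fin p) ℝ) (g : Fin n → Fin p → ℝ) (i : Fin n) (j : Fin p) :
    ℝ :=
  ∑ l, P l j * g i l

lemma isIsoGaussian_rotatedRows (hP : Pᵀ * P = 1) :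
    IsIsoGaussian (Measure.pi fun _ : Fin n => Measure.pi fun _ : Fin p => gaussianReal 0 1)
      (rotatedRows P) := by
  intro v hv
  have h := map_orthonormal_gaussian_matrix (fun (j : Fin p) (i : Fin n) (l : Fin p) => v i * P l j)
    fun t => by
      have h1 : ∀ (i : Fin n) (l : Fin p), (∑ j, t j * (v i * P l j)) ^ 2 =
          v i ^ 2 * (∑ j, t j * P l j) ^ 2 := fun i l => by
        rw [← mul_pow, Finset.mul_sum]
        congr 1
        exact Finset.sum_congr rfl fun j _ => by ring
      simp_rw [h1, ← Finset.mul_sum]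
      rw [← Finset.sum_mul, hv, one_mul]
      exact sum_sq_orthonormal_columns hP (c := id) Function.injective_id t
  refine Eq.trans ?_ h
  congr 1
  ext g j
  refine Finset.sum_congr rfl fun i _ => ?_
  rw [rotatedRows, Finset.mul_sum]
  exact Finset.sum_congr rfl fun l _ => by ring

lemma isIsoGaussian_rotatedRows_transpose (hP : Pᵀ * P = 1) {σ : Type*} [Fintype σ]
    {c : σ → Fin p} (hc : Function.Injective c) :
    IsIsoGaussian (Measure.pi fun _ : Fin n => Measure.pi fun _ : Fin p => gaussianReal 0 1)
      (fun g (j : σ) i => rotatedRows P g i (c j)) := by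
  intro x hx
  have h := map_orthonormal_gaussian_matrix
    (fun (i' : Fin n) (i : Fin n) (l : Fin p) => if i' = i then ∑ j, x j * P l (c j) else 0)
    fun t => by
      have h1 : ∀ (i : Fin n) (l : Fin p),
          (∑ i', t i' * (if i' = i then ∑ j, x j * P l (c j) else 0)) ^ 2 =
          t i ^ 2 * (∑ j, x j * P l (c j)) ^ 2 := fun i l => by
        simp [mul_pow]
      simp_rw [h1, ← Finset.mul_sum, sum_sq_orthonormal_columns hP hc x, hx, mul_one]
  refine Eq.trans ?_ h
  congr 1
  ext g i
  have h2 : ∀ i', ∑ l, (if i = i' then ∑ j, x j * P l (c j) else 0) * g i' l =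
      if i = i' then ∑ l, (∑ j, x j * P l (c j)) * g i' l else 0 := fun i' => by
    split_ifs <;> simp
  simp_rw [h2, Finset.sum_ite_eq, Finset.mem_univ, if_true, rotatedRows, Finset.mul_sum,
    Finset.sum_mul]
  rw [Finset.sum_comm]
  exact Finset.sum_congr rfl fun l _ => Finset.sum_congr rfl fun j _ => by ring

lemma covHalf_mulVec_apply (lam : ℕ → ℝ) (g : Fin n → Fin p → ℝ) (i : Fin n) (l : Fin p) :
    (covHalf p lam P).mulVec (g i) l =
      ∑ j : Fin p, √(lam (j + 1)) * rotatedRows P g i j * P l j := by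
  rw [covHalf, ← Matrix.mulVec_mulVec, ← Matrix.mulVec_mulVec]
  change ∑ j, P l j * _ = _
  refine Finset.sum_congr rfl fun j _ => ?_
  rw [Matrix.mulVec_diagonal]
  simp only [Matrix.mulVec, dotProduct, Matrix.transpose_apply, rotatedRows]
  ring

lemma sum_sq_transpose_covHalf (hP : Pᵀ * P = 1) {lam : ℕ → ℝ}
    (hlam : ∀ j : Fin p, 0 ≤ lam (j + 1)) (g : Fin n → Fin p → ℝ) (v : Fin n → ℝ) :
    ∑ l, (∑ i, v i * (covHalf p lam P).mulVec (g i) l) ^ 2 =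
      ∑ j : Fin p, lam (j + 1) * (∑ i, v i * rotatedRows P g i j) ^ 2 := by
  have h := sum_sq_orthonormal_columns hP (c := id) Function.injective_id
    fun j : Fin p => √(lam (j + 1)) * ∑ i, v i * rotatedRows P g i j
  simp_rw [mul_pow, Real.sq_sqrt (hlam _)] at h
  rw [← h]
  refine Finset.sum_congr rfl fun l _ => ?_
  congr 1
  simp_rw [covHalf_mulVec_apply, Finset.mul_sum, Finset.sum_mul]
  rw [Finset.sum_comm]
  exact Finset.sum_congr rfl fun j _ => Finset.sum_congr rfl fun i _ => by simp only [id]; ring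

lemma sum_covHalf_mul (lam : ℕ → ℝ) (g : Fin n → Fin p → ℝ) (h : Fin p → ℝ) (i : Fin n) :
    ∑ l, (covHalf p lam P).mulVec (g i) l * h l =
      ∑ j : Fin p, √(lam (j + 1)) * rotatedRows P g i j * ∑ l, h l * P l j := by
  simp_rw [covHalf_mulVec_apply, Finset.mul_sum, Finset.sum_mul]
  rw [Finset.sum_comm]
  exact Finset.sum_congr rfl fun j _ => Finset.sum_congr rfl fun l _ => by ring

lemma dotProduct_eigendecomposition (d h : Fin p → ℝ) :
    h ⬝ᵥ (P * Matrix.diagonal d * Pᵀ).mulVec h = ∑ j, d j * (∑ l, h l * P l j) ^ 2 := by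
  rw [← Matrix.mulVec_mulVec, ← Matrix.mulVec_mulVec, Matrix.dotProduct_mulVec]
  refine Finset.sum_congr rfl fun j _ => ?_
  rw [Matrix.mulVec_diagonal]
  simp only [Matrix.mulVec, Matrix.vecMul, dotProduct, Matrix.transpose_apply]
  simp_rw [mul_comm (P _ j) (h _)]
  ring

end Rotation

/-- A design whose smallest singular value is at least `√R / 4`, and which is bounded below on
the cone of directions with `‖Σ^{1/2} h‖ ≥ r ‖h‖`. -/
def GoodDesign {p n : ℕ} (Sig : Matrix (Fin p) (Fin p) ℝ) (R r : ℝ) (x : Fin n → Fin p → ℝ) :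
    Prop :=
  (∀ v : Fin n → ℝ, R / 16 * ∑ i, v i ^ 2 ≤ ∑ l, (∑ i, v i * x i l) ^ 2) ∧
    ∀ h : Fin p → ℝ, r ^ 2 * ∑ l, h l ^ 2 ≤ h ⬝ᵥ Sig.mulVec h →
      (n : ℝ) / 64 * (h ⬝ᵥ Sig.mulVec h) ≤ ∑ i, (∑ l, x i l * h l) ^ 2

lemma measurableSet_goodDesign {p n : ℕ} (Sig : Matrix (Fin p) (Fin p) ℝ) (R r : ℝ) :
    MeasurableSet {x : Fin n → Fin p → ℝ | GoodDesign Sig R r x} := by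
  have h : {x : Fin n → Fin p → ℝ | GoodDesign Sig R r x} =
      (⋂ v : Fin n → ℝ, {x | R / 16 * ∑ i, v i ^ 2 ≤ ∑ l, (∑ i, v i * x i l) ^ 2}) ∩
        ⋂ h : Fin p → ℝ, ⋂ (_ : r ^ 2 * ∑ l, h l ^ 2 ≤ h ⬝ᵥ Sig.mulVec h),
          {x | (n : ℝ) / 64 * (h ⬝ᵥ Sig.mulVec h) ≤ ∑ i, (∑ l, x i l * h l) ^ 2} := by
    ext x
    simp [GoodDesign]
  rw [h]
  refine (IsClosed.inter (isClosed_iInter fun v => isClosed_le (by fun_prop) (by fun_prop))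
    (isClosed_iInter fun h => isClosed_iInter fun _ =>
      isClosed_le (by fun_prop) (by fun_prop))).measurableSet

lemma GoodDesign.bounds {p n : ℕ} (hn : 0 < n) {Sig : Matrix (Fin p) (Fin p) ℝ} {R r : ℝ}
    (hR : 0 < R) (hr : 0 ≤ r) {x : Fin n → Fin p → ℝ} (hx : GoodDesign Sig R r x)
    {β b : Fin p → ℝ} {ξ : Fin n → ℝ}
    (h : IsMinInterp x (fun i => (∑ j, x i j * β j) + ξ i) b) :
    enorm2 (fun j => b j - β j) ≤ enorm2 β + 4 * enorm2 ξ / √R ∧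
      predNorm Sig (fun j => b j - β j) ≤
        max ((enorm2 β + 4 * enorm2 ξ / √R) * r) (8 * enorm2 ξ / √n) := by
  have hρ := h.enorm2_sub_le hR hx.1
  refine ⟨hρ, ?_⟩
  set ρ := enorm2 β + 4 * enorm2 ξ / √R
  set d : Fin p → ℝ := fun j => b j - β j with hd
  by_contra! hcon
  obtain ⟨h1, h2⟩ := max_lt_iff.1 hcon
  have hn' : (0 : ℝ) < n := Nat.cast_pos.2 hn
  have hρr : 0 ≤ ρ * r := mul_nonneg ((enorm2_nonneg _).trans hρ) hr
  have hpos : 0 < predNorm Sig d := hρr.trans_lt h1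
  have hq : predNorm Sig d ^ 2 = d ⬝ᵥ Sig.mulVec d :=
    Real.sq_sqrt (Real.sqrt_pos.1 hpos).le
  have hcone : r ^ 2 * ∑ l, d l ^ 2 ≤ d ⬝ᵥ Sig.mulVec d := by
    rw [← hq, ← enorm2_sq, ← mul_pow]
    have h3 : r * enorm2 d ≤ ρ * r := by
      rw [mul_comm]
      exact mul_le_mul_of_nonneg_right hρ hr
    have := mul_nonneg hr (enorm2_nonneg d)
    exact pow_le_pow_left₀ this (h3.trans h1.le) 2
  have hlow := hx.2 d hcone
  have hres : ∀ i, ∑ l, x i l * d l = ξ i := fun i => by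
    have := h.1 i
    simp only [hd, mul_sub, Finset.sum_sub_distrib]
    linarith
  simp_rw [hres] at hlow
  rw [← hq, ← enorm2_sq] at hlow
  have hsq : (8 * enorm2 ξ / √n) ^ 2 < predNorm Sig d ^ 2 :=
    pow_lt_pow_left₀ h2 (by have := enorm2_nonneg ξ; positivity) two_ne_zero
  rw [div_pow, mul_pow, Real.sq_sqrt hn'.le, div_lt_iff₀ hn'] at hsq
  nlinarith

lemma measure_not_goodDesign_le {p n : ℕ} {lam : ℕ → ℝ} {P : Matrix (Fin p) (Fin p) ℝ}
    (hP : Pᵀ * P = 1) (hP' : P * Pᵀ = 1) (hlam : ∀ j : Fin p, 0 ≤ lam (j + 1))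
    {w : Fin p → ℝ} (hw : ∀ j, 0 ≤ w j) (hwlam : ∀ j : Fin p, w j ≤ lam (j + 1)) {L : ℝ}
    (hL0 : 0 < L) (hwL : ∀ j, w j ≤ L) (hwR : 1024 * n * L ≤ ∑ j, w j) {r η : ℝ} (hr : 0 < r)
    (hη : η ≤ 1 / 2 ^ 24)
    (hrη : ∑ j : Fin p, min (lam (j + 1)) (r ^ 2) ≤ η * n * r ^ 2) :
    (Measure.pi fun _ : Fin n => Measure.pi fun _ : Fin p => gaussianReal 0 1)
      {g : Fin n → Fin p → ℝ |
        ¬ GoodDesign (P * Matrix.diagonal (fun j : Fin p => lam (j + 1)) * Pᵀ) (∑ j, w j) r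
          fun i => (covHalf p lam P).mulVec (g i)} ≤
      ENNReal.ofReal (5 * Real.exp (-(n / 1024))) := by
  have hn0 : (0 : ℝ) ≤ n := Nat.cast_nonneg n
  have hr2 : 0 < r ^ 2 := by positivity
  have hmin : ∀ j : Fin p, 0 ≤ min (lam (j + 1)) (r ^ 2) := fun j => le_min (hlam j) hr2.le
  have hηn : η * n * r ^ 2 ≤ 1 / 2 ^ 24 * n * r ^ 2 := by gcongr
  have hcard : (Fintype.card {j : Fin p // r ^ 2 / 2 ^ 14 ≤ lam (j + 1)} : ℝ) ≤ n / 1024 := by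
    have h1 : (Fintype.card {j : Fin p // r ^ 2 / 2 ^ 14 ≤ lam (j + 1)} : ℝ) * (r ^ 2 / 2 ^ 14) ≤
        ∑ j : Fin p, min (lam (j + 1)) (r ^ 2) := by
      rw [Fintype.card_subtype, ← nsmul_eq_mul, ← Finset.sum_const]
      refine (Finset.sum_le_sum fun j hj => ?_).trans
        (Finset.sum_le_sum_of_subset_of_nonneg (Finset.filter_subset _ _) fun j _ _ => hmin j)
      refine le_min (Finset.mem_filter.1 hj).2 ?_
      exact div_le_self hr2.le (by norm_num)
    have h2 := (h1.trans hrη).trans hηn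
    have h3 : (Fintype.card {j : Fin p // r ^ 2 / 2 ^ 14 ≤ lam (j + 1)} : ℝ) * r ^ 2 ≤
        n / 1024 * r ^ 2 := by
      norm_num at h2 ⊢
      linarith
    exact le_of_mul_le_mul_right h3 hr2
  have hA := (isIsoGaussian_rotatedRows (n := n) hP).measure_not_lower_le hw hwL hL0
    (N := n) (by simp) hwR
  have hB := (isIsoGaussian_rotatedRows_transpose (n := n) hP
    (c := fun j : {j : Fin p // r ^ 2 / 2 ^ 14 ≤ lam (j + 1)} => (j : Fin p))
    Subtype.val_injective).measure_not_lower_le (w := fun _ => 1) (L := 1) (fun _ => zero_le_one)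
    (fun _ => le_rfl) one_pos hcard (by simp; linarith)
  have hC := (isIsoGaussian_rotatedRows (n := n) hP).measure_not_upper_le
    (w := fun j : Fin p => if r ^ 2 / 2 ^ 14 ≤ lam (j + 1) then 0 else lam (j + 1))
    (L := r ^ 2 / 2 ^ 14) (N := n)
    (fun j => by split_ifs; exacts [le_rfl, hlam j])
    (fun j => by split_ifs with h; exacts [by positivity, (not_le.1 h).le])
    (by positivity) (by simp)
  have hsum : ENNReal.ofReal (2 * Real.exp (-(n : ℝ))) +
      ENNReal.ofReal (2 * Real.exp (-((n : ℝ) / 1024))) + ENNReal.ofReal (Real.exp (-(n : ℝ))) ≤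
        ENNReal.ofReal (5 * Real.exp (-(n / 1024))) := by
    rw [← ENNReal.ofReal_add (by positivity) (by positivity),
      ← ENNReal.ofReal_add (by positivity) (by positivity)]
    refine ENNReal.ofReal_le_ofReal ?_
    have : Real.exp (-(n : ℝ)) ≤ Real.exp (-((n : ℝ) / 1024)) := by
      rw [Real.exp_le_exp]
      linarith
    linarith
  refine le_trans (measure_mono ?_) ((measure_union_le _ _).trans
    ((add_le_add ((measure_union_le _ _).trans (add_le_add hA hB)) hC).trans hsum))
  intro g hg
  by_contra hcon
  simp only [Set.mem_union, Set.mem_ofPred_eq, not_or, not_not] at hcon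
  obtain ⟨⟨gA, gB⟩, gC⟩ := hcon
  refine hg ⟨fun v => ?_, fun h hcone => ?_⟩
  · rw [sum_sq_transpose_covHalf hP hlam]
    have := gA (WithLp.toLp 2 v)
    rw [EuclideanSpace.norm_sq_eq] at this
    simp only [Real.norm_eq_abs, sq_abs] at this
    exact this.trans (Finset.sum_le_sum fun j _ =>
      mul_le_mul_of_nonneg_right (hwlam j) (sq_nonneg _))
  · rw [dotProduct_eigendecomposition] at hcone ⊢
    simp_rw [sum_covHalf_mul]
    refine restricted_lower_bound hlam (r := r) hn0 (fun x => ?_) (fun v => ?_) ?_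
    · have := gB (WithLp.toLp 2 x)
      rw [EuclideanSpace.norm_sq_eq] at this
      simpa using this
    · have := gC (WithLp.toLp 2 v)
      rw [EuclideanSpace.norm_sq_eq] at this
      simp only [Real.norm_eq_abs, sq_abs] at this
      refine this.trans (mul_le_mul_of_nonneg_right ?_ (Finset.sum_nonneg fun _ _ => sq_nonneg _))
      have h1 : ∑ j : Fin p, (if r ^ 2 / 2 ^ 14 ≤ lam (j + 1) then 0 else lam (j + 1)) ≤
          ∑ j : Fin p, min (lam (j + 1)) (r ^ 2) := by
        refine Finset.sum_le_sum fun j _ => ?_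
        split_ifs with hj
        · exact hmin j
        · refine le_min le_rfl ((not_le.1 hj).le.trans (div_le_self hr2.le (by norm_num)))
      have h2 := (h1.trans hrη).trans hηn
      have h3 : 0 ≤ n * r ^ 2 := by positivity
      norm_num at h2 ⊢
      linarith
    · have h1 := sum_sq_orthonormal_columns (P := Pᵀ) (by simpa using hP') (c := id)
        Function.injective_id h
      simp only [Matrix.transpose_apply, id] at h1
      rw [h1]
      exact hcone

section Rates

variable {p n : ℕ} {lam : ℕ → ℝ}

lemma sum_tail_eq_rsum {k : ℕ} (hk : 1 ≤ k) :
    ∑ j : Fin p, (if k ≤ (j : ℕ) + 1 then lam (j + 1) else 0) = rsum p lam k := by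
  rw [Fin.sum_univ_eq_sum_range (fun j => if k ≤ j + 1 then lam (j + 1) else 0) p,
    Finset.range_eq_Ico, Finset.sum_Ico_add' (fun j => if k ≤ j then lam j else 0) 0 p 1,
    ← Finset.sum_filter, rsum]
  refine Finset.sum_congr ?_ fun _ _ => rfl
  ext i
  simp only [Finset.mem_filter, Finset.mem_Ico, Finset.mem_Icc]
  omega

/-- The infimum defining `rstar` is positive and attained. -/
lemma rstar_spec {η : ℝ} (hn : 0 < n) (hη0 : 0 < η) (hη : η < 1)
    (hlam : ∀ j : Fin p, 0 ≤ lam (j + 1)) {w : Fin p → ℝ} (hw : ∀ j, 0 ≤ w j)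
    (hwlam : ∀ j : Fin p, w j ≤ lam (j + 1)) {L : ℝ} (hL0 : 0 < L) (hwL : ∀ j, w j ≤ L)
    (hwR : n * L ≤ ∑ j, w j) :
    0 < rstar p n lam η ∧ ∑ j : Fin p, min (lam (j + 1)) (rstar p n lam η ^ 2) ≤
      η * n * rstar p n lam η ^ 2 := by
  have hn' : (0 : ℝ) < n := Nat.cast_pos.2 hn
  have hS : {r : ℝ | 0 < r ∧ ∑ i : Fin p, min (lam ((i : ℕ) + 1)) (r ^ 2) ≤ η * n * r ^ 2} =
      Set.Ici √L ∩
        {r : ℝ | ∑ i : Fin p, min (lam ((i : ℕ) + 1)) (r ^ 2) ≤ η * n * r ^ 2} := by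
    ext r
    constructor
    · rintro ⟨hr, hsum⟩
      refine ⟨?_, hsum⟩
      by_contra hlt
      rw [Set.mem_Ici, not_le, Real.lt_sqrt hr.le] at hlt
      have h1 : ∀ j : Fin p, w j * (r ^ 2 / L) ≤ min (lam ((j : ℕ) + 1)) (r ^ 2) := fun j => by
        refine le_min ?_ ?_
        · exact (mul_le_of_le_one_right (hw j) ((div_le_one hL0).2 hlt.le)).trans (hwlam j)
        · calc w j * (r ^ 2 / L) ≤ L * (r ^ 2 / L) := by
                gcongr
                exact hwL j
            _ = r ^ 2 := by field_simp
      have h2 := (Finset.sum_le_sum fun j (_ : j ∈ Finset.univ) => h1 j).trans hsum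
      rw [← Finset.sum_mul] at h2
      have h3 : n * L * (r ^ 2 / L) ≤ (∑ j, w j) * (r ^ 2 / L) := by gcongr
      have h4 : n * L * (r ^ 2 / L) = n * r ^ 2 := by field_simp
      have h5 : 0 < n * r ^ 2 := by positivity
      nlinarith
    · rintro ⟨hr, hsum⟩
      exact ⟨(Real.sqrt_pos.2 hL0).trans_le hr, hsum⟩
  have hclosed : IsClosed {r : ℝ | 0 < r ∧
      ∑ i : Fin p, min (lam ((i : ℕ) + 1)) (r ^ 2) ≤ η * n * r ^ 2} := by
    rw [hS]
    exact isClosed_Ici.inter (isClosed_le (by fun_prop) (by fun_prop))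
  have hne : {r : ℝ | 0 < r ∧
      ∑ i : Fin p, min (lam ((i : ℕ) + 1)) (r ^ 2) ≤ η * n * r ^ 2}.Nonempty := by
    have ht : 0 ≤ (∑ i : Fin p, lam ((i : ℕ) + 1)) / (η * n) :=
      div_nonneg (Finset.sum_nonneg fun j _ => hlam j) (by positivity)
    refine ⟨√((∑ i : Fin p, lam ((i : ℕ) + 1)) / (η * n) + 1), by positivity, ?_⟩
    rw [Real.sq_sqrt (by positivity)]
    calc _ ≤ ∑ i : Fin p, lam ((i : ℕ) + 1) := Finset.sum_le_sum fun j _ => min_le_left _ _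
      _ = η * n * ((∑ i : Fin p, lam ((i : ℕ) + 1)) / (η * n)) := by field_simp
      _ ≤ _ := by gcongr; linarith
  exact hclosed.csInf_mem hne ⟨0, fun r hr => hr.1.le⟩

end Rates

lemma pi_mvGaussian_eq_map (n p : ℕ) (lam : ℕ → ℝ) (P : Matrix (Fin p) (Fin p) ℝ) :
    (Measure.pi fun _ : Fin n => mvGaussian p lam P) =
      Measure.map (fun g i => (covHalf p lam P).mulVec (g i))
        (Measure.pi fun _ : Fin n => Measure.pi fun _ : Fin p => gaussianReal 0 1) := by
  have hm : Measurable fun g : Fin p → ℝ => (covHalf p lam P).mulVec g :=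
    (by fun_prop : Continuous fun g : Fin p → ℝ => (covHalf p lam P).mulVec g).measurable
  have : IsProbabilityMeasure (Measure.map (fun g : Fin p → ℝ => (covHalf p lam P).mulVec g)
      (Measure.pi fun _ : Fin p => gaussianReal 0 1)) :=
    Measure.isProbabilityMeasure_map hm.aemeasurable
  simp only [mvGaussian, _root_.stdGaussian]
  exact (Measure.pi_map_pi fun _ => hm.aemeasurable).symm

/-- Theorem 1, upper bounds: there is an absolute constant `c > 0` such
that in the model `Y = Xβ* + ξ` with i.i.d. `N(0,Σ)` rows, if `k* ≤ c n` then for `η`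
small enough there are absolute constants `c₁, c₂, c₃ > 0` such that with probability at
least `1 - c₁ e^{-c₂ n}` the minimum `ℓ2`-norm interpolator `β̂` satisfies
`‖β̂ - β*‖₂ ≤ ρ` and `‖Σ^{1/2}(β̂ - β*)‖₂ ≤ max (ρ r*(η)) (c₃ ‖ξ‖₂/√n)`. -/
theorem stmt0 :
    ∃ c0 > (0 : ℝ), ∃ c > (0 : ℝ), ∃ η0 > (0 : ℝ), ∀ η : ℝ, 0 < η → η ≤ η0 →
    ∃ c1 > (0 : ℝ), ∃ c2 > (0 : ℝ), ∃ c3 > (0 : ℝ),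
    ∀ (n p : ℕ), 0 < n → n ≤ p →
    ∀ (lam : ℕ → ℝ) (Porth Sig : Matrix (Fin p) (Fin p) ℝ),
      (∀ k, 1 ≤ k → k ≤ p → 0 ≤ lam k) →
      (∀ j k, 1 ≤ j → j ≤ k → k ≤ p → lam k ≤ lam j) →
      Porth * Porthᵀ = 1 →
      Sig = Porth * Matrix.diagonal (fun i : Fin p => lam ((i : ℕ) + 1)) * Porthᵀ →
      n ≤ Sig.rank →
    ∀ (Ω : Type) (_ : MeasurableSpace Ω) (P : Measure Ω), IsProbabilityMeasure P →
    ∀ (X : Ω → Fin n → Fin p → ℝ) (ξ : Ω → Fin n → ℝ) (βstar : Fin p → ℝ)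
      (βhat : Ω → Fin p → ℝ),
      -- the rows of `X` are i.i.d. `N(0,Σ)`
      Measure.map X P = (Measure.pi fun _ : Fin n => mvGaussian p lam Porth) →
      -- `β̂` is the minimum `ℓ2`-norm interpolator for `Y = Xβ* + ξ`
      (∀ᵐ ω ∂P, IsMinInterp (X ω)
        (fun i => (∑ j, X ω i j * βstar j) + ξ ω i) (βhat ω)) →
      -- `k*` is well defined and `k* ≤ c n`
      (kstarSet p lam c0 n).Nonempty → (kstar p lam c0 n : ℝ) ≤ c * n →
      ENNReal.ofReal (1 - c1 * Real.exp (-c2 * n)) ≤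
        P {ω | enorm2 (fun j => βhat ω j - βstar j) ≤
                 rho p lam c0 n βstar (enorm2 (ξ ω)) ∧
               predNorm Sig (fun j => βhat ω j - βstar j) ≤
                 max (rho p lam c0 n βstar (enorm2 (ξ ω)) * rstar p n lam η)
                     (c3 * enorm2 (ξ ω) / Real.sqrt n)} := by
  refine ⟨1024, by norm_num, 1, one_pos, 1 / 2 ^ 24, by norm_num, fun η hη0 hη =>
    ⟨5, by norm_num, 1 / 1024, by norm_num, 8, by norm_num, ?_⟩⟩
  rintro n p hn - lam Porth Sig hlam hanti hP' rfl - Ω _ P _ X ξ βstar βhat hX hβ hne -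
  have hn' : (0 : ℝ) < n := Nat.cast_pos.2 hn
  have hlam' : ∀ j : Fin p, 0 ≤ lam (j + 1) := fun j => hlam _ (by omega) (by omega)
  have hP : Porthᵀ * Porth = 1 := mul_eq_one_comm.1 hP'
  obtain ⟨hk1, hkp, hkR⟩ : kstar p lam 1024 n ∈ kstarSet p lam 1024 n := Nat.sInf_mem hne
  set k := kstar p lam 1024 n with hk
  have hL0 : 0 < lam k := by
    refine (hlam k hk1 hkp).lt_of_ne fun h => ?_
    rw [← h, div_zero] at hkR
    linarith
  rw [le_div_iff₀ hL0] at hkR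
  set w : Fin p → ℝ := fun j => if k ≤ (j : ℕ) + 1 then lam (j + 1) else 0 with hw_def
  have hw : ∀ j, 0 ≤ w j := fun j => by
    simp only [hw_def]
    split_ifs
    exacts [hlam' j, le_rfl]
  have hwlam : ∀ j : Fin p, w j ≤ lam (j + 1) := fun j => by
    simp only [hw_def]
    split_ifs
    exacts [le_rfl, hlam' j]
  have hwL : ∀ j, w j ≤ lam k := fun j => by
    simp only [hw_def]
    split_ifs with h
    exacts [hanti _ _ hk1 h (by omega), hL0.le]
  have hwsum : ∑ j, w j = rsum p lam k := sum_tail_eq_rsum hk1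
  rw [← hwsum] at hkR
  have hnL : 0 < n * lam k := by positivity
  have hR : 0 < rsum p lam k := by
    rw [← hwsum]
    linarith
  obtain ⟨hr, hrη⟩ := rstar_spec hn hη0 (hη.trans_lt (by norm_num)) hlam' hw hwlam hL0 hwL
    (by linarith)
  have hgood := measure_not_goodDesign_le (n := n) hP hP' hlam' hw hwlam hL0 hwL hkR hr hη hrη
  rw [hwsum] at hgood
  have hlaw := hX.trans (pi_mvGaussian_eq_map n p lam Porth)
  set G : Set (Fin n → Fin p → ℝ) := {x | GoodDesign (Porth *
    Matrix.diagonal (fun j : Fin p => lam (j + 1)) * Porthᵀ) (rsum p lam k) (rstar p n lam η) x}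
    with hG
  have hΦ : Measurable fun (g : Fin n → Fin p → ℝ) i => (covHalf p lam Porth).mulVec (g i) :=
    (by fun_prop : Continuous _).measurable
  have hXm : AEMeasurable X P := by
    refine AEMeasurable.of_map_ne_zero ?_
    rw [hlaw]
    exact (Measure.isProbabilityMeasure_map hΦ.aemeasurable).ne_zero
  have hbad : P {ω | X ω ∉ G} ≤ ENNReal.ofReal (5 * Real.exp (-(n / 1024))) := by
    refine (Measure.le_map_apply hXm Gᶜ).trans ?_
    rw [hlaw, Measure.map_apply hΦ (measurableSet_goodDesign _ _ _).compl]
    exact hgood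
  set A := {ω | enorm2 (fun j => βhat ω j - βstar j) ≤
      rho p lam 1024 n βstar (enorm2 (ξ ω)) ∧ _} with hA
  have hAc : P Aᶜ ≤ ENNReal.ofReal (5 * Real.exp (-(n / 1024))) := by
    refine (measure_mono_ae ?_).trans hbad
    filter_upwards [hβ] with ω hω hωA hωG
    exact hωA (GoodDesign.bounds hn hR hr.le hωG hω)
  rw [ENNReal.ofReal_sub _ (by positivity), ENNReal.ofReal_one, tsub_le_iff_right,
    ← measure_univ (μ := P), ← Set.union_compl_self A]
  refine (measure_union_le _ _).trans (add_le_add le_rfl (hAc.trans_eq ?_))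
  congr 3
  ring
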